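/- Let P = abcdef be a simple hexagon, counterclockwise, in which a is the only reflex vertex other than possibly c or e, and suppose c does not see e (the segment ce is not contained in P). Then (i) Wedge(a) ∩ Wedge(c) ≠ ∅, and (ii) Wedge(a) ⊆ L(a, c). -/

import Mathlib

open scoped BigOperators

/-- Points in the plane. -/
abbrev Pt := ℝ × ℝ

/-- 2×2 determinant (cross product) of two plane vectors. -/
noncomputable def det2 (p q : Pt) : ℝ := p.1 * q.2 - p.2 * q.1

/-- Open half-plane strictly to the left of the directed line from `p` to `q`. -/
def Lhp (p q : Pt) : Set Pt := {x | 0 < det2 (q - p) (x - p)}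

/-- Open half-plane strictly to the right of the directed line from `p` to `q`. -/
def Rhp (p q : Pt) : Set Pt := {x | det2 (q - p) (x - p) < 0}

/-- The boundary of the polygon with vertices `v 0, …, v (n-1)`:
the union of its (cyclically consecutive) edges. -/
def polyBoundary {n : ℕ} [NeZero n] (v : Fin n → Pt) : Set Pt :=
  ⋃ i : Fin n, segment ℝ (v i) (v (i + 1))

/-- `v` describes a simple polygon: at least 3 distinct vertices, and two distinct
edges may only meet at a common endpoint. -/
def IsSimplePolygon {n : ℕ} [NeZero n] (v : Fin n → Pt) : Prop :=
  3 ≤ n ∧ Function.Injective v ∧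
    ∀ i j : Fin n, i ≠ j →
      segment ℝ (v i) (v (i + 1)) ∩ segment ℝ (v j) (v (j + 1)) ⊆
        ({v i, v (i + 1)} ∩ {v j, v (j + 1)} : Set Pt)

/-- The interior of the polygon: the union of the bounded connected components of the
complement of the boundary. -/
def polyInterior {n : ℕ} [NeZero n] (v : Fin n → Pt) : Set Pt :=
  {x | x ∉ polyBoundary v ∧
    Bornology.IsBounded (connectedComponentIn (polyBoundary v)ᶜ x)}

/-- The (closed) polygonal region: interior together with boundary. -/
def polyRegion {n : ℕ} [NeZero n] (v : Fin n → Pt) : Set Pt :=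
  polyBoundary v ∪ polyInterior v

/-- Twice the signed area of the polygon. -/
noncomputable def signedArea2 {n : ℕ} [NeZero n] (v : Fin n → Pt) : ℝ :=
  ∑ i : Fin n, det2 (v i) (v (i + 1))

/-- The vertices are listed in counterclockwise order. -/
def IsCCW {n : ℕ} [NeZero n] (v : Fin n → Pt) : Prop := 0 < signedArea2 v

/-- The vertex `v i` of a counterclockwise polygon is strictly convex
(interior angle strictly less than 180°). -/
def StrictlyConvexAt {n : ℕ} [NeZero n] (v : Fin n → Pt) (i : Fin n) : Prop :=
  0 < det2 (v i - v (i - 1)) (v (i + 1) - v i)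

/-- The vertex `v i` of a counterclockwise polygon is reflex
(interior angle greater than or equal to 180°). -/
def ReflexAt {n : ℕ} [NeZero n] (v : Fin n → Pt) (i : Fin n) : Prop :=
  det2 (v i - v (i - 1)) (v (i + 1) - v i) ≤ 0

/-- The wedge of vertex `v i`:  `L(v⁻, v) ∩ R(v⁺, v) ∩ interior P`. -/
def Wedge {n : ℕ} [NeZero n] (v : Fin n → Pt) (i : Fin n) : Set Pt :=
  Lhp (v (i - 1)) (v i) ∩ Rhp (v (i + 1)) (v i) ∩ polyInterior v

/-- `x` sees `y` inside the polygon `v`: the segment `xy` is contained in the region. -/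
def Sees {n : ℕ} [NeZero n] (v : Fin n → Pt) (x y : Pt) : Prop :=
  segment ℝ x y ⊆ polyRegion v

/-- The kernel of the polygon: the points of the region that see every point of it. -/
def polyKernel {n : ℕ} [NeZero n] (v : Fin n → Pt) : Set Pt :=
  {x ∈ polyRegion v | ∀ y ∈ polyRegion v, segment ℝ x y ⊆ polyRegion v}

/-- The open triangle on three points. -/
def openTriangle (a b c : Pt) : Set Pt := interior (convexHull ℝ {a, b, c})

/-- `a b c d` (in counterclockwise order) form a strictly convex quadrilateral. -/
def StrictConvexQuad (a b c d : Pt) : Prop :=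
  0 < det2 (b - a) (c - b) ∧ 0 < det2 (c - b) (d - c) ∧
    0 < det2 (d - c) (a - d) ∧ 0 < det2 (a - d) (b - a)

/-- The closed region of a quadrilateral cell. -/
noncomputable def quadSet (q : Pt × Pt × Pt × Pt) : Set Pt :=
  convexHull ℝ {q.1, q.2.1, q.2.2.1, q.2.2.2}

/-- The closed region of a triangular cell. -/
noncomputable def triSet (t : Pt × Pt × Pt) : Set Pt :=
  convexHull ℝ {t.1, t.2.1, t.2.2}

/-- The vertices of a quadrilateral cell. -/
noncomputable def quadVerts (q : Pt × Pt × Pt × Pt) : Finset Pt :=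
  {q.1, q.2.1, q.2.2.1, q.2.2.2}

/-- The vertices of a triangular cell. -/
noncomputable def triVerts (t : Pt × Pt × Pt) : Finset Pt :=
  {t.1, t.2.1, t.2.2}

/-- A strictly convex quadrangulation of a finite planar point set `S`:
a decomposition of `conv S` into strictly convex quadrilaterals and at most one
(nondegenerate) triangle, with pairwise disjoint interiors, whose vertex set contains
`S`, and such that no point of `S` is interior to a cell. -/
structure ConvexQuadrangulation (S : Finset Pt) where
  quads : Finset (Pt × Pt × Pt × Pt)
  tris : Finset (Pt × Pt × Pt)
  tris_card : tris.card ≤ 1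
  quads_convex : ∀ q ∈ quads, StrictConvexQuad q.1 q.2.1 q.2.2.1 q.2.2.2
  tris_nondeg : ∀ t ∈ tris, 0 < det2 (t.2.1 - t.1) (t.2.2 - t.2.1)
  covers : ((⋃ q ∈ quads, quadSet q) ∪ ⋃ t ∈ tris, triSet t) = convexHull ℝ (S : Set Pt)
  cells_disjoint : ((quadSet '' quads) ∪ (triSet '' tris)).Pairwise
    fun A B => interior A ∩ interior B = ∅
  verts_cover : (S : Set Pt) ⊆
    ((quads.biUnion quadVerts ∪ tris.biUnion triVerts : Finset Pt) : Set Pt)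
  no_pt_in_quad_interior : ∀ q ∈ quads, ∀ p ∈ S, p ∉ interior (quadSet q)
  no_pt_in_tri_interior : ∀ t ∈ tris, ∀ p ∈ S, p ∉ interior (triSet t)

/-- The Steiner points of a quadrangulation: vertices of the decomposition not in `S`. -/
noncomputable def steinerPoints (S : Finset Pt) (Q : ConvexQuadrangulation S) : Finset Pt :=
  (Q.quads.biUnion quadVerts ∪ Q.tris.biUnion triVerts) \ S

/-!
Around a point outside the polygon the boundary has winding number `0`, because the winding number
is constant on components of the complement and vanishes near infinity. As `c` does not see `e`,
some point `x` of `ce` is such a point. From `x` the path `cde` is seen under a positive angle,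
which the rest of the boundary must cancel; this puts `a` on the same side of `ce` as `d` and shows
that neither of the triangles `abc` and `efa` winds around `x`.

Since nonadjacent edges are disjoint, Plücker relations between the orientations of vertex triples
then place `a` strictly inside the triangle `cde`, the signed area excluding the case that `a` is
beyond both `cd` and `de`, and place `c` to the right of `fa`. So the line `ac` separates `b` from
the wedge at `a`, which is (ii). Moreover `a` is strictly to the left of `bc`, `cd`, `de` and
`ef`, so a point of the wedge close to `a` is strictly to the left of all six edges. The boundary
winds around it a positive number of times, hence it lies in the interior and in every wedge.
-/

open Set Filter Bornology
open scoped Topology Real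

section Orientation

/-- Twice the signed area of the triangle `p q r`; it is positive iff `r` lies strictly to the left
of the directed line from `p` to `q`. -/
noncomputable def orient (p q r : Pt) : ℝ := det2 (q - p) (r - p)

variable {p q r s c e x : Pt}

theorem orient_eq (p q r : Pt) :
    orient p q r = (q.1 - p.1) * (r.2 - p.2) - (q.2 - p.2) * (r.1 - p.1) := rfl

@[simp]
theorem orient_self_left (p q : Pt) : orient p q p = 0 := by
  simp only [orient_eq]; ring

@[simp]
theorem orient_self_right (p q : Pt) : orient p q q = 0 := by
  simp only [orient_eq]; ring

theorem orient_rotate (p q r : Pt) : orient q r p = orient p q r := by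
  simp only [orient_eq]; ring

theorem orient_flip (p q r : Pt) : orient q p r = -orient p q r := by
  simp only [orient_eq]; ring

theorem orient_swap (p q r : Pt) : orient p.swap q.swap r.swap = orient r q p := by
  simp only [orient_eq, Prod.fst_swap, Prod.snd_swap]; ring

theorem orient_combo (p q c e : Pt) {s t : ℝ} (hst : s + t = 1) :
    orient p q (s • c + t • e) = s * orient p q c + t * orient p q e := by
  obtain rfl : s = 1 - t := by linarith
  simp only [orient_eq, Prod.fst_add, Prod.snd_add, Prod.smul_fst, Prod.smul_snd, smul_eq_mul]
  ring

theorem continuous_orient (p q : Pt) : Continuous (orient p q) := by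
  simp only [funext (orient_eq p q)]
  fun_prop

theorem orient_nonneg_of_mem_segment (hx : x ∈ segment ℝ c e) (hc : 0 ≤ orient p q c)
    (he : 0 ≤ orient p q e) : 0 ≤ orient p q x := by
  obtain ⟨s, t, hs, ht, hst, rfl⟩ := hx
  rw [orient_combo p q c e hst]
  positivity

theorem orient_pos_of_mem_openSegment (hx : x ∈ openSegment ℝ c e) (hc : 0 ≤ orient p q c)
    (he : 0 < orient p q e) : 0 < orient p q x := by
  obtain ⟨s, t, hs, ht, hst, rfl⟩ := hx
  rw [orient_combo p q c e hst]
  positivity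

theorem orient_apex_pos (h : 0 < orient p q r) (hx : x ∈ openSegment ℝ p r) :
    0 < orient p q x ∧ 0 < orient q r x := by
  refine ⟨orient_pos_of_mem_openSegment hx (orient_self_left p q).ge h, ?_⟩
  rw [openSegment_symm] at hx
  exact orient_pos_of_mem_openSegment hx (orient_self_right q r).ge (by rwa [orient_rotate])

theorem orient_eq_zero_of_mem_segment (hx : x ∈ segment ℝ p q) : orient p q x = 0 := by
  obtain ⟨s, t, -, -, hst, rfl⟩ := hx
  rw [orient_combo p q p q hst, orient_self_left, orient_self_right, mul_zero, mul_zero, add_zero]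

theorem not_disjoint_segment_of_orient (hr : 0 ≤ orient p q r) (hs : orient p q s < 0)
    (hp : orient r s p ≤ 0) (hq : 0 ≤ orient r s q) :
    ¬ Disjoint (segment ℝ p q) (segment ℝ r s) := by
  set δ := orient p q r - orient p q s with hδ
  have δ_pos : 0 < δ := by linarith
  have δ_eq : orient r s q - orient r s p = δ := by
    simp only [hδ, orient_eq]; ring
  refine not_disjoint_iff.2 ⟨(orient r s q / δ) • p + (-orient r s p / δ) • q,
    ⟨_, _, by positivity, div_nonneg (by linarith) δ_pos.le, ?_, rfl⟩,
    -orient p q s / δ, orient p q r / δ, div_nonneg (by linarith) δ_pos.le, by positivity, ?_, ?_⟩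
  · field_simp; linarith
  · field_simp; linarith
  · ext <;> simp only [Prod.fst_add, Prod.snd_add, Prod.smul_fst, Prod.smul_snd, smul_eq_mul] <;>
      field_simp <;> simp only [orient_eq] <;> ring

theorem disjoint_segment_swap :
    Disjoint (segment ℝ p.swap q.swap) (segment ℝ r.swap s.swap) ↔
      Disjoint (segment ℝ q p) (segment ℝ s r) := by
  have image_swap (y z : Pt) : segment ℝ y.swap z.swap = Prod.swap '' segment ℝ z y := by
    rw [segment_symm ℝ z y]
    exact (image_segment ℝ (LinearEquiv.prodComm ℝ ℝ ℝ).toLinearMap.toAffineMap y z).symm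
  rw [image_swap, image_swap, disjoint_image_iff Prod.swap_injective]

end Orientation

section Angles

/-- The coordinate identification of the plane with `ℂ`. -/
noncomputable def toComplex : Pt ≃L[ℝ] ℂ := Complex.equivRealProdCLM.symm

/-- The signed angle in `(-π, π]` under which the directed segment from `p` to `q` is seen from `x`;
it is `0` if `x` is `p` or `q`. -/
noncomputable def angleAt (x p q : Pt) : ℝ := Complex.arg (toComplex (q - x) / toComplex (p - x))

variable {x p q r : Pt}

theorem toComplex_sub_ne_zero (h : p ≠ x) : toComplex (p - x) ≠ 0 :=
  toComplex.map_ne_zero_iff.2 (sub_ne_zero.2 h)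

theorem im_toComplex_div (x p q : Pt) : (toComplex (q - x) / toComplex (p - x)).im =
    orient p q x / Complex.normSq (toComplex (p - x)) := by
  have re_eq (z : Pt) : (toComplex z).re = z.1 := rfl
  have im_eq (z : Pt) : (toComplex z).im = z.2 := rfl
  simp only [Complex.div_im, re_eq, im_eq, orient_eq, Prod.fst_sub, Prod.snd_sub]
  ring

theorem angleAt_neg_iff : angleAt x p q < 0 ↔ orient p q x < 0 := by
  rw [angleAt, Complex.arg_neg_iff, im_toComplex_div]
  rcases eq_or_ne p x with rfl | hp
  · simp
  · rw [div_lt_iff₀ (Complex.normSq_pos.2 (toComplex_sub_ne_zero hp)), zero_mul]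

theorem angleAt_nonneg_iff : 0 ≤ angleAt x p q ↔ 0 ≤ orient p q x := by
  simpa only [not_lt] using angleAt_neg_iff.not

theorem angleAt_pos (h : 0 < orient p q x) : 0 < angleAt x p q := by
  refine (angleAt_nonneg_iff.2 h.le).lt_of_ne' fun h0 => ?_
  have hp : p ≠ x := by
    rintro rfl
    simp at h
  have him := (Complex.arg_eq_zero_iff.1 h0).2
  rw [im_toComplex_div, div_eq_zero_iff] at him
  exact him.elim h.ne' (Complex.normSq_pos.2 (toComplex_sub_ne_zero hp)).ne'

theorem mem_segment_of_angleAt_eq_pi (h : angleAt x p q = π) : x ∈ segment ℝ p q := by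
  obtain ⟨hre, him⟩ := Complex.arg_eq_pi_iff.1 h
  set z := toComplex (q - x) / toComplex (p - x)
  have hp : toComplex (p - x) ≠ 0 := fun h0 => by simp [z, h0] at hre
  have hz : z = (z.re : ℂ) := Complex.ext rfl him
  have hq : q - x = (-z.re) • (x - p) := by
    apply toComplex.injective
    rw [← neg_sub p x, smul_neg, neg_smul, neg_neg, map_smul, Complex.real_smul, ← hz,
      div_mul_cancel₀ _ hp]
  rw [mem_segment_iff_sameRay, hq]
  exact SameRay.sameRay_nonneg_smul_right _ (neg_nonneg.2 hre.le)

theorem angleAt_symm (h : x ∉ segment ℝ p q) : angleAt x q p = -angleAt x p q := by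
  have hne : angleAt x p q ≠ π := fun h' => h (mem_segment_of_angleAt_eq_pi h')
  rw [angleAt] at hne
  rw [angleAt, angleAt, ← inv_div, Complex.arg_inv, if_neg hne]

theorem angleAt_nonpos (h : orient p q x ≤ 0) (hx : x ∉ segment ℝ p q) : angleAt x p q ≤ 0 := by
  have : 0 ≤ angleAt x q p := angleAt_nonneg_iff.2 (by rw [orient_flip]; linarith)
  linarith [angleAt_symm hx]

theorem coe_angleAt (hp : p ≠ x) (hq : q ≠ x) :
    (angleAt x p q : Real.Angle) =
      Complex.arg (toComplex (q - x)) - Complex.arg (toComplex (p - x)) :=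
  Complex.arg_div_coe_angle (toComplex_sub_ne_zero hq) (toComplex_sub_ne_zero hp)

theorem continuousAt_angleAt (h : x ∉ segment ℝ p q) :
    ContinuousAt (fun y => angleAt y p q) x := by
  have hp : p ≠ x := by rintro rfl; exact h (left_mem_segment ℝ _ _)
  have hq : q ≠ x := by rintro rfl; exact h (right_mem_segment ℝ _ _)
  have hcont (z : Pt) : ContinuousAt (fun y => toComplex (z - y)) x :=
    (toComplex.continuous.comp (continuous_const.sub continuous_id)).continuousAt
  refine ContinuousAt.comp (g := Complex.arg) (Complex.continuousAt_arg ?_)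
    ((hcont q).div (hcont p) (toComplex_sub_ne_zero hp))
  exact Complex.mem_slitPlane_iff_arg.2 ⟨fun h' => h (mem_segment_of_angleAt_eq_pi h'),
    div_ne_zero (toComplex_sub_ne_zero hq) (toComplex_sub_ne_zero hp)⟩

theorem tendsto_angleAt_cobounded (p q : Pt) :
    Tendsto (fun y => angleAt y p q) (cobounded Pt) (𝓝 0) := by
  have hinv : Tendsto (fun y => (toComplex (p - y))⁻¹) (cobounded Pt) (𝓝 0) :=
    tendsto_inv₀_cobounded.comp
      (toComplex.antilipschitz.tendsto_cobounded.comp (tendsto_const_sub_cobounded p))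
  have hquot : Tendsto (fun y => toComplex (q - y) / toComplex (p - y)) (cobounded Pt) (𝓝 1) := by
    have h1 := (hinv.const_mul (toComplex (q - p))).const_add 1
    rw [mul_zero, add_zero] at h1
    refine h1.congr' ?_
    filter_upwards [eventually_ne_cobounded p] with y hy
    have hne := toComplex_sub_ne_zero hy.symm
    rw [← sub_add_sub_cancel q p y, map_add, add_div, div_self hne, add_comm, div_eq_mul_inv]
  have harg := (Complex.continuousAt_arg Complex.one_mem_slitPlane).tendsto.comp hquot
  rwa [Complex.arg_one] at harg

end Angles

section TotalAngle

variable {n : ℕ} [NeZero n] {v : Fin n → Pt} {x : Pt}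

/-- The total signed angle under which the closed polygon `v` is seen from `x`, that is, `2π` times
its winding number around `x`. -/
noncomputable def totalAngle (v : Fin n → Pt) (x : Pt) : ℝ := ∑ i, angleAt x (v i) (v (i + 1))

theorem totalAngle_mem_zmultiples (h : ∀ i, v i ≠ x) :
    totalAngle v x ∈ AddSubgroup.zmultiples (2 * π) := by
  refine Real.Angle.coe_eq_zero_iff.1 ?_
  have hsum : ((totalAngle v x : ℝ) : Real.Angle) =
      ∑ i, (angleAt x (v i) (v (i + 1)) : Real.Angle) :=
    map_sum Real.Angle.coeHom _ _
  rw [hsum]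
  simp only [coe_angleAt (h _) (h _), Finset.sum_sub_distrib, sub_eq_zero]
  exact Equiv.sum_comp (Equiv.addRight (1 : Fin n))
    (fun i => (Complex.arg (toComplex (v i - x)) : Real.Angle))

theorem nonneg_of_mem_zmultiples_of_neg_lt {T t : ℝ} (ht : t ∈ AddSubgroup.zmultiples T)
    (hT : 0 < T) (hlt : -T < t) : 0 ≤ t := by
  obtain ⟨k, rfl⟩ := ht
  simp only [zsmul_eq_mul] at hlt ⊢
  have : (-1 : ℝ) < k := by nlinarith
  have : (0 : ℤ) ≤ k := by exact_mod_cast this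
  positivity

theorem eq_zero_of_mem_zmultiples_of_abs_lt {T t : ℝ} (ht : t ∈ AddSubgroup.zmultiples T)
    (habs : |t| < T) : t = 0 := by
  have hT : 0 < T := (abs_nonneg t).trans_lt habs
  obtain ⟨hlo, hhi⟩ := abs_lt.1 habs
  have := nonneg_of_mem_zmultiples_of_neg_lt (neg_mem ht) hT (by linarith)
  linarith [nonneg_of_mem_zmultiples_of_neg_lt ht hT hlo]

theorem totalAngle_pos (h : ∀ i, 0 < orient (v i) (v (i + 1)) x) : 0 < totalAngle v x :=
  Finset.sum_pos (fun i _ => angleAt_pos (h i)) Finset.univ_nonempty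

theorem notMem_segment_of_notMem_polyBoundary (h : x ∉ polyBoundary v) (i : Fin n) :
    x ∉ segment ℝ (v i) (v (i + 1)) := fun h' => h (mem_iUnion.2 ⟨i, h'⟩)

theorem ne_of_notMem_polyBoundary (h : x ∉ polyBoundary v) (i : Fin n) : v i ≠ x := by
  rintro rfl
  exact notMem_segment_of_notMem_polyBoundary h i (left_mem_segment ℝ _ _)

theorem continuousOn_totalAngle (v : Fin n → Pt) :
    ContinuousOn (totalAngle v) (polyBoundary v)ᶜ := fun _ hy =>
  ContinuousAt.continuousWithinAt <| tendsto_finsetSum _ fun i _ =>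
    continuousAt_angleAt (notMem_segment_of_notMem_polyBoundary hy i)

theorem tendsto_totalAngle_cobounded (v : Fin n → Pt) :
    Tendsto (totalAngle v) (cobounded Pt) (𝓝 0) := by
  have := tendsto_finsetSum Finset.univ fun i _ => tendsto_angleAt_cobounded (v i) (v (i + 1))
  rwa [Finset.sum_const_zero] at this

theorem mem_polyInterior_of_totalAngle_ne_zero (h : x ∉ polyBoundary v) (h0 : totalAngle v x ≠ 0) :
    x ∈ polyInterior v := by
  set C := connectedComponentIn (polyBoundary v)ᶜ x
  have hsub : C ⊆ (polyBoundary v)ᶜ := connectedComponentIn_subset _ x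
  have hmem : ∀ y ∈ C, totalAngle v y ∈ AddSubgroup.zmultiples (2 * π) := fun y hy =>
    totalAngle_mem_zmultiples (ne_of_notMem_polyBoundary (hsub hy))
  have hdiscrete : IsDiscrete (AddSubgroup.zmultiples (2 * π) : Set ℝ) :=
    isDiscrete_iff_discreteTopology.2 <|
      inferInstanceAs (DiscreteTopology (AddSubgroup.zmultiples (2 * π)))
  have hconst : ∀ y ∈ C, totalAngle v y = totalAngle v x := fun y hy =>
    isPreconnected_connectedComponentIn.constant_of_mapsTo hdiscrete
      ((continuousOn_totalAngle v).mono hsub) hmem hy (mem_connectedComponentIn h)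
  have hsmall : ∀ᶠ y in cobounded Pt, |totalAngle v y| < 2 * π := by
    have := (tendsto_totalAngle_cobounded v).abs
    rw [abs_zero] at this
    exact this.eventually_lt_const Real.two_pi_pos
  refine ⟨h, isBounded_def.2 ?_⟩
  filter_upwards [hsmall] with y hy hyC
  exact h0 (hconst y hyC ▸ eq_zero_of_mem_zmultiples_of_abs_lt (hmem y hyC) hy)

theorem mem_Wedge_of_forall_orient_pos (h : ∀ i, 0 < orient (v i) (v (i + 1)) x) (i : Fin n) :
    x ∈ Wedge v i := by
  have hbdry : x ∉ polyBoundary v := fun hx => by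
    obtain ⟨j, hj⟩ := mem_iUnion.1 hx
    exact (h j).ne' (orient_eq_zero_of_mem_segment hj)
  refine ⟨⟨?_, ?_⟩, mem_polyInterior_of_totalAngle_ne_zero hbdry (totalAngle_pos h).ne'⟩
  · change 0 < orient (v (i - 1)) (v i) x
    simpa only [sub_add_cancel] using h (i - 1)
  · change orient (v (i + 1)) (v i) x < 0
    rw [orient_flip]
    exact neg_neg_of_pos (h i)

end TotalAngle

section Blocking

variable {p q r x : Pt}

theorem totalAngle_triangle (p q r x : Pt) :
    totalAngle ![p, q, r] x = angleAt x p q + angleAt x q r + angleAt x r p :=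
  Fin.sum_univ_three _

theorem totalAngle_triangle_nonneg (h : 0 ≤ orient p q r) (hp : p ≠ x) (hq : q ≠ x) (hr : r ≠ x) :
    0 ≤ totalAngle ![p, q, r] x := by
  have hne : ∀ i, ![p, q, r] i ≠ x := by
    intro i; fin_cases i <;> assumption
  refine nonneg_of_mem_zmultiples_of_neg_lt (totalAngle_mem_zmultiples hne) Real.two_pi_pos ?_
  have hlow (y z : Pt) : -π < angleAt x y z := Complex.neg_pi_lt_arg _
  have hsum : orient p q x + orient q r x + orient r p x = orient p q r := by
    simp only [orient_eq]; ring
  have hone : 0 ≤ orient p q x ∨ 0 ≤ orient q r x ∨ 0 ≤ orient r p x := by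
    by_contra! hneg
    linarith
  rw [totalAngle_triangle]
  have := Real.pi_pos
  simp only [← angleAt_nonneg_iff] at hone
  rcases hone with h' | h' | h' <;> linarith [hlow p q, hlow q r, hlow r p]

theorem angleAt_add_nonneg (h : 0 ≤ orient p q r) (hx : 0 ≤ orient p r x)
    (hp : p ≠ x) (hq : q ≠ x) (hr : r ≠ x) : 0 ≤ angleAt x p q + angleAt x q r := by
  by_cases hmem : x ∈ segment ℝ r p
  · refine add_nonneg (angleAt_nonneg_iff.2 ?_) (angleAt_nonneg_iff.2 ?_)
    · exact orient_nonneg_of_mem_segment hmem h (orient_self_left p q).ge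
    · exact orient_nonneg_of_mem_segment hmem (orient_self_right q r).ge (by rwa [orient_rotate])
  · have htri := totalAngle_triangle_nonneg h hp hq hr
    have hrp : angleAt x r p ≤ 0 := angleAt_nonpos (by rw [orient_flip]; linarith) hmem
    rw [totalAngle_triangle] at htri
    linarith

theorem exists_totalAngle_eq_zero_of_not_sees {n : ℕ} [NeZero n] {v : Fin n → Pt}
    (h : ¬ Sees v p q) : ∃ x ∈ segment ℝ p q, x ∉ polyBoundary v ∧ totalAngle v x = 0 := by
  obtain ⟨x, hx, hout⟩ := not_subset.1 h
  rw [polyRegion, mem_union, not_or] at hout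
  refine ⟨x, hx, hout.1, ?_⟩
  contrapose! hout
  exact fun hbdry => mem_polyInterior_of_totalAngle_ne_zero hbdry hout

variable {v : Fin 6 → Pt}

theorem totalAngle_hexagon (v : Fin 6 → Pt) (x : Pt) :
    totalAngle v x = angleAt x (v 0) (v 1) + angleAt x (v 1) (v 2) + angleAt x (v 2) (v 3) +
      angleAt x (v 3) (v 4) + angleAt x (v 4) (v 5) + angleAt x (v 5) (v 0) :=
  Fin.sum_univ_six _

theorem totalAngle_quadrilateral (p q r s x : Pt) :
    totalAngle ![p, q, r, s] x =
      angleAt x p q + angleAt x q r + angleAt x r s + angleAt x s p :=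
  Fin.sum_univ_four _

theorem totalAngle_hexagon_eq_add (hac : x ∉ segment ℝ (v 0) (v 2))
    (hea : x ∉ segment ℝ (v 4) (v 0)) :
    totalAngle v x = totalAngle ![v 0, v 1, v 2] x + totalAngle ![v 2, v 3, v 4, v 0] x +
      totalAngle ![v 4, v 5, v 0] x := by
  rw [totalAngle_hexagon, totalAngle_quadrilateral, totalAngle_triangle, totalAngle_triangle,
    angleAt_symm hac, angleAt_symm hea]
  ring

theorem totalAngle_quadrilateral_eq_zero {c d e a : Pt} (hcde : 0 < orient c d e)
    (hcae : 0 < orient c a e) (hx : x ∈ openSegment ℝ c e)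
    (hc : c ≠ x) (hd : d ≠ x) (he : e ≠ x) (ha : a ≠ x) :
    totalAngle ![c, d, e, a] x = 0 := by
  obtain ⟨hcdx, hdex⟩ := orient_apex_pos hcde hx
  obtain ⟨hcax, haex⟩ := orient_apex_pos hcae hx
  have hcd := angleAt_pos hcdx
  have hde := angleAt_pos hdex
  have hea : angleAt x e a < 0 := angleAt_neg_iff.2 (by rw [orient_flip]; linarith)
  have hac : angleAt x a c < 0 := angleAt_neg_iff.2 (by rw [orient_flip]; linarith)
  have hlow (y z : Pt) : -π < angleAt x y z := Complex.neg_pi_lt_arg _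
  have hhigh (y z : Pt) : angleAt x y z ≤ π := Complex.arg_le_pi _
  have hne : ∀ i, ![c, d, e, a] i ≠ x := by
    intro i; fin_cases i <;> assumption
  refine eq_zero_of_mem_zmultiples_of_abs_lt (totalAngle_mem_zmultiples hne) ?_
  rw [totalAngle_quadrilateral, abs_lt]
  constructor <;> linarith [hlow e a, hlow a c, hhigh c d, hhigh d e]

theorem orient_pos_of_totalAngle_eq_zero (hb : 0 ≤ orient (v 0) (v 1) (v 2))
    (hd : 0 < orient (v 2) (v 3) (v 4)) (hf : 0 ≤ orient (v 4) (v 5) (v 0))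
    (hne : ∀ i, v i ≠ x) (hx : x ∈ openSegment ℝ (v 2) (v 4)) (h0 : totalAngle v x = 0) :
    0 < orient (v 2) (v 0) (v 4) := by
  by_contra! hcae
  have hseg := openSegment_subset_segment ℝ _ _ hx
  have hac : 0 ≤ orient (v 0) (v 2) x :=
    orient_nonneg_of_mem_segment hseg (orient_self_right _ _).ge (by rw [orient_flip]; linarith)
  have hea : 0 ≤ orient (v 4) (v 0) x :=
    orient_nonneg_of_mem_segment hseg (by rw [← orient_rotate, orient_flip]; linarith)
      (orient_self_left _ _).ge
  have habc := angleAt_add_nonneg hb hac (hne 0) (hne 1) (hne 2)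
  have hefa := angleAt_add_nonneg hf hea (hne 4) (hne 5) (hne 0)
  obtain ⟨hcdx, hdex⟩ := orient_apex_pos hd hx
  rw [totalAngle_hexagon] at h0
  linarith [angleAt_pos hcdx, angleAt_pos hdex]

theorem totalAngle_triangle_eq_zero (hb : 0 ≤ orient (v 0) (v 1) (v 2))
    (hd : 0 < orient (v 2) (v 3) (v 4)) (hf : 0 ≤ orient (v 4) (v 5) (v 0))
    (hcae : 0 < orient (v 2) (v 0) (v 4))
    (hne : ∀ i, v i ≠ x) (hx : x ∈ openSegment ℝ (v 2) (v 4)) (h0 : totalAngle v x = 0) :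
    totalAngle ![v 0, v 1, v 2] x = 0 ∧ totalAngle ![v 4, v 5, v 0] x = 0 := by
  obtain ⟨hcax, haex⟩ := orient_apex_pos hcae hx
  have hac : x ∉ segment ℝ (v 0) (v 2) := fun hmem =>
    hcax.ne' (orient_eq_zero_of_mem_segment (segment_symm ℝ (v 0) (v 2) ▸ hmem))
  have hea : x ∉ segment ℝ (v 4) (v 0) := fun hmem =>
    haex.ne' (orient_eq_zero_of_mem_segment (segment_symm ℝ (v 4) (v 0) ▸ hmem))
  have habc := totalAngle_triangle_nonneg hb (hne 0) (hne 1) (hne 2)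
  have hefa := totalAngle_triangle_nonneg hf (hne 4) (hne 5) (hne 0)
  rw [totalAngle_hexagon_eq_add hac hea,
    totalAngle_quadrilateral_eq_zero hd hcae hx (hne 2) (hne 3) (hne 4) (hne 0)] at h0
  constructor <;> linarith

theorem orient_signs_of_not_sees (hb : 0 < orient (v 0) (v 1) (v 2))
    (hd : 0 < orient (v 2) (v 3) (v 4)) (hf : 0 < orient (v 4) (v 5) (v 0))
    (h : ¬ Sees v (v 2) (v 4)) :
    0 < orient (v 2) (v 0) (v 4) ∧
      (0 ≤ orient (v 5) (v 0) (v 2) → orient (v 4) (v 5) (v 2) ≤ 0) ∧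
      (0 ≤ orient (v 4) (v 0) (v 1) → orient (v 1) (v 2) (v 4) ≤ 0) := by
  obtain ⟨x, hseg, hbdry, h0⟩ := exists_totalAngle_eq_zero_of_not_sees h
  have hne := ne_of_notMem_polyBoundary hbdry
  have hx := mem_openSegment_of_ne_left_right (hne 2) (hne 4) hseg
  have hx' := (openSegment_symm ℝ (v 2) (v 4)) ▸ hx
  have hcae := orient_pos_of_totalAngle_eq_zero hb.le hd hf.le hne hx h0
  obtain ⟨habc, hefa⟩ := totalAngle_triangle_eq_zero hb.le hd hf.le hcae hne hx h0
  obtain ⟨hcax, haex⟩ := orient_apex_pos hcae hx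
  refine ⟨hcae, fun hfac => ?_, fun heab => ?_⟩ <;> by_contra! hpos
  · have hfax : 0 < orient (v 5) (v 0) x :=
      orient_pos_of_mem_openSegment hx hfac (by rwa [orient_rotate])
    have hefx : 0 < orient (v 4) (v 5) x :=
      orient_pos_of_mem_openSegment hx' (orient_self_left _ _).ge hpos
    refine (totalAngle_pos fun i => ?_).ne' hefa
    fin_cases i <;> assumption
  · have habx : 0 < orient (v 0) (v 1) x :=
      orient_pos_of_mem_openSegment hx' (by rwa [orient_rotate]) hb
    have hbcx : 0 < orient (v 1) (v 2) x :=
      orient_pos_of_mem_openSegment hx (orient_self_right _ _).ge hpos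
    refine (totalAngle_pos fun i => ?_).ne' habc
    fin_cases i <;> assumption

end Blocking

/-- What the argument uses of the hexagon `abcdef` when `c` does not see `e`: the turns at `b`, `d`,
`f` and `a`, the signs forced by a point of `ce` outside the polygon, the signed area cut into
triangles at `a`, and disjoint pairs of edges. The conditions are chosen so that they are permuted
by the reflection in `ObstructedHexagon.mirror`. -/
structure ObstructedHexagon (a b c d e f : Pt) : Prop where
  abc : 0 < orient a b c
  cde : 0 < orient c d e
  efa : 0 < orient e f a
  fab : orient f a b ≤ 0
  cae : 0 < orient c a e
  efc_of_fac : 0 ≤ orient f a c → orient e f c ≤ 0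
  bce_of_eab : 0 ≤ orient e a b → orient b c e ≤ 0
  area : 0 < orient a b c + orient c d a + orient a d e + orient e f a
  bc_ef : Disjoint (segment ℝ b c) (segment ℝ e f)
  fa_cd : Disjoint (segment ℝ f a) (segment ℝ c d)
  ab_de : Disjoint (segment ℝ a b) (segment ℝ d e)
  ef_cd : Disjoint (segment ℝ e f) (segment ℝ c d)
  bc_de : Disjoint (segment ℝ b c) (segment ℝ d e)
  fa_de : Disjoint (segment ℝ f a) (segment ℝ d e)
  ab_cd : Disjoint (segment ℝ a b) (segment ℝ c d)

namespace ObstructedHexagon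

variable {a b c d e f : Pt}

-- A reflection reverses orientation, so the vertices have to be listed backwards as well.
theorem mirror (h : ObstructedHexagon a b c d e f) :
    ObstructedHexagon a.swap f.swap e.swap d.swap c.swap b.swap where
  abc := by rw [orient_swap]; exact h.efa
  cde := by rw [orient_swap]; exact h.cde
  efa := by rw [orient_swap]; exact h.abc
  fab := by rw [orient_swap]; exact h.fab
  cae := by rw [orient_swap]; exact h.cae
  efc_of_fac := by
    rw [orient_swap, orient_swap, ← orient_rotate e b c]; exact h.bce_of_eab
  bce_of_eab := by
    rw [orient_swap, orient_swap, ← orient_rotate c e f]; exact h.efc_of_fac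
  area := by simp only [orient_swap]; linarith [h.area]
  bc_ef := disjoint_segment_swap.2 h.bc_ef.symm
  fa_cd := disjoint_segment_swap.2 h.ab_de
  ab_de := disjoint_segment_swap.2 h.fa_cd
  ef_cd := disjoint_segment_swap.2 h.bc_de
  bc_de := disjoint_segment_swap.2 h.ef_cd
  fa_de := disjoint_segment_swap.2 h.ab_cd
  ab_cd := disjoint_segment_swap.2 h.fa_de

-- The alternative `0 < orient f a c`, `0 < orient e a b` would make `bc` cross `ef`.
theorem fac_neg (h : ObstructedHexagon a b c d e f) : orient f a c < 0 := by
  have plucker : orient e a b * orient f a c =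
      orient a b c * orient e f a + -orient f a b * orient c a e := by
    simp only [orient_eq]; ring
  have hprod : 0 < orient e a b * orient f a c := by
    have := mul_nonneg (neg_nonneg.2 h.fab) h.cae.le
    linarith [mul_pos h.abc h.efa]
  by_contra! hfac
  have heab : 0 < orient e a b := pos_of_mul_pos_left hprod hfac
  have hefb : orient e f b = orient e f a - orient f a b + orient e a b := by
    simp only [orient_eq]; ring
  have hbcf : orient b c f = orient a b c - orient f a b + orient f a c := by
    simp only [orient_eq]; ring
  refine not_disjoint_segment_of_orient (p := f) (q := e) (r := c) (s := b) ?_ ?_ ?_ ?_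
    (by simpa only [segment_symm ℝ] using h.bc_ef.symm) <;> rw [orient_flip]
  · linarith [h.efc_of_fac hfac]
  · linarith [h.efa, h.fab]
  · linarith [h.abc, h.fab]
  · linarith [h.bce_of_eab heab.le]

theorem eab_neg (h : ObstructedHexagon a b c d e f) : orient e a b < 0 := by
  simpa only [orient_swap] using h.mirror.fac_neg

theorem ade_neg_of_cda_nonpos (h : ObstructedHexagon a b c d e f) (hcda : orient c d a ≤ 0) :
    orient a d e < 0 := by
  by_contra! hade
  have hfac := h.fac_neg
  have hcdf : orient c d f < 0 := by
    by_contra! hcdf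
    have plucker : orient f a d * orient c a e =
        orient e f a * -orient c d a + -orient f a c * orient a d e := by
      simp only [orient_eq]; ring
    have hfad : 0 ≤ orient f a d := by
      refine nonneg_of_mul_nonneg_left (plucker ▸ add_nonneg ?_ ?_) h.cae
      · exact mul_nonneg h.efa.le (by linarith)
      · exact mul_nonneg (by linarith) hade
    refine not_disjoint_segment_of_orient (p := f) (q := a) (r := d) (s := c) hfad hfac ?_ ?_
      (by rw [segment_symm ℝ d c]; exact h.fa_cd) <;> rw [orient_flip] <;> linarith
  have hefc : orient e f c ≤ 0 := by
    have plucker : orient e f c * -orient c d a + -orient f a c * orient c d e =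
        orient c a e * orient c d f := by
      simp only [orient_eq]; ring
    nlinarith [mul_pos (neg_pos.2 hfac) h.cde, mul_neg_of_pos_of_neg h.cae hcdf]
  have hefd : 0 ≤ orient e f d := by
    have plucker : orient e f c * orient a d e + orient c a e * orient e f d =
        orient e f a * orient c d e := by
      simp only [orient_eq]; ring
    nlinarith [mul_pos h.efa h.cde, h.cae]
  exact not_disjoint_segment_of_orient h.cde.le hcdf hefc hefd h.ef_cd.symm

theorem cda_neg_of_ade_nonpos (h : ObstructedHexagon a b c d e f) (hade : orient a d e ≤ 0) :
    orient c d a < 0 := by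
  rw [← orient_swap] at hade ⊢
  exact h.mirror.ade_neg_of_cda_nonpos hade

theorem deb_neg (h : ObstructedHexagon a b c d e f) (hade : orient a d e < 0)
    (habd : 0 ≤ orient a b d) : orient d e b < 0 := by
  by_contra! hdeb
  refine not_disjoint_segment_of_orient (p := d) (q := e) (r := b) (s := a) hdeb
    (by rwa [orient_rotate]) ?_ ?_ (by rw [segment_symm ℝ b a]; exact h.ab_de.symm)
  · rw [orient_flip]; linarith
  · rw [orient_flip, orient_rotate]; linarith [h.eab_neg]

theorem bcd_neg (h : ObstructedHexagon a b c d e f) (hcda : orient c d a < 0)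
    (hade : orient a d e < 0) : orient b c d < 0 := by
  by_contra! hbcd
  rcases le_total (orient a b d) 0 with habd | habd
  · refine not_disjoint_segment_of_orient (p := c) (q := d) (r := b) (s := a)
      (by rwa [orient_rotate]) hcda ?_ ?_ (by rw [segment_symm ℝ b a]; exact h.ab_cd.symm) <;>
      rw [orient_flip] <;> linarith [h.abc]
  · have hdeb := h.deb_neg hade habd
    have hbce : orient b c e ≤ 0 := by
      have plucker : orient a d e * orient b c e =
          -orient e a b * orient c d e + -orient d e b * orient c a e := by
        simp only [orient_eq]; ring
      nlinarith [mul_pos (neg_pos.2 h.eab_neg) h.cde, mul_pos (neg_pos.2 hdeb) h.cae]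
    refine not_disjoint_segment_of_orient (p := d) (q := e) (r := c) (s := b)
      (by rw [orient_rotate]; exact h.cde.le) hdeb ?_ ?_
      (by rw [segment_symm ℝ c b]; exact h.bc_de.symm) <;>
      rw [orient_flip] <;> linarith

theorem afd_neg (h : ObstructedHexagon a b c d e f) (hcda : orient c d a < 0)
    (hade : orient a d e < 0) : orient a f d < 0 := by
  by_contra! hafd
  have hbcd := h.bcd_neg hcda hade
  have hdef : orient d e f < 0 := by
    have := h.mirror.bcd_neg (by rwa [orient_swap]) (by rwa [orient_swap])
    rwa [orient_swap] at this
  have hbcd_eq : orient b c d = orient a b c + orient c d a - orient a b d := by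
    simp only [orient_eq]; ring
  have hdef_eq : orient d e f = orient e f a + orient a d e + orient a f d := by
    simp only [orient_eq]; ring
  have hdeb_eq : orient d e b = orient a d e - orient e a b + orient a b d := by
    simp only [orient_eq]; ring
  have hlt : orient a f d < orient a b d := by linarith [h.area]
  have hdeb := h.deb_neg hade (hafd.trans hlt.le)
  have plucker : orient a b d * orient e f a + orient f a b * orient a d e =
      -orient e a b * orient a f d := by
    simp only [orient_eq]; ring
  have hefa : orient e f a < -orient e a b := by
    nlinarith [mul_nonneg_of_nonpos_of_nonpos h.fab hade.le, h.eab_neg]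
  -- The signed area is `orient b c d + orient d e b + (orient e f a + orient e a b)`.
  linarith [h.area]

theorem cda_pos (h : ObstructedHexagon a b c d e f) : 0 < orient c d a := by
  by_contra! hcda
  have hade := h.ade_neg_of_cda_nonpos hcda
  replace hcda := h.cda_neg_of_ade_nonpos hade.le
  have hafd := h.afd_neg hcda hade
  have habd : 0 < orient a b d := by
    have := h.mirror.afd_neg (by rwa [orient_swap]) (by rwa [orient_swap])
    rwa [orient_swap, orient_flip, orient_rotate, neg_lt_zero] at this
  have plucker : orient a b c * -orient a f d + orient a b d * -orient f a c +
      orient f a b * orient c d a = 0 := by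
    simp only [orient_eq]; ring
  have h1 := mul_pos h.abc (neg_pos.2 hafd)
  have h2 := mul_pos habd (neg_pos.2 h.fac_neg)
  linarith [mul_nonneg_of_nonpos_of_nonpos h.fab hcda.le]

theorem ade_pos (h : ObstructedHexagon a b c d e f) : 0 < orient a d e := by
  simpa only [orient_swap] using h.mirror.cda_pos

end ObstructedHexagon

section Corner

variable {a b c f y : Pt}

theorem orient_pos_of_mem_corner (habc : 0 < orient a b c) (hfac : orient f a c < 0)
    (hfab : orient f a b ≤ 0) (hfay : 0 < orient f a y) (haby : 0 < orient a b y) :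
    0 < orient a c y := by
  have plucker : -orient f a b * orient a c y =
      orient a b c * orient f a y + orient a b y * -orient f a c := by
    simp only [orient_eq]; ring
  have hprod : 0 < -orient f a b * orient a c y := by
    linarith [mul_pos habc hfay, mul_pos haby (neg_pos.2 hfac)]
  exact pos_of_mul_pos_right hprod (neg_nonneg.2 hfab)

theorem orient_ne_zero_of_inter_segment_subset (habc : 0 < orient a b c) (hfac : orient f a c < 0)
    (h : segment ℝ f a ∩ segment ℝ a b ⊆ {a}) : orient f a b ≠ 0 := by
  intro h0
  have cramer : orient a b c • (f - a) = (-orient f a c) • (b - a) := by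
    simp only [orient_eq] at h0
    ext <;> simp only [orient_eq, Prod.smul_fst, Prod.smul_snd, Prod.fst_sub, Prod.snd_sub,
      smul_eq_mul]
    · linear_combination (c.1 - a.1) * h0
    · linear_combination (c.2 - a.2) * h0
  have hray : SameRay ℝ (f -ᵥ a) (b -ᵥ a) :=
    .inr (.inr ⟨_, _, habc, neg_pos.2 hfac, cramer⟩)
  rcases wbtw_total_of_sameRay_vsub_left hray with hf | hb
  · obtain rfl : f = a := h ⟨left_mem_segment ℝ f a, mem_segment_iff_wbtw.2 hf⟩
    simp [orient_eq] at hfac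
  · obtain rfl : b = a :=
      h ⟨segment_symm ℝ a f ▸ mem_segment_iff_wbtw.2 hb, right_mem_segment ℝ a b⟩
    simp [orient_eq] at habc

theorem mem_closure_corner (hfab : orient f a b < 0) :
    a ∈ closure {y | 0 < orient f a y ∧ 0 < orient a b y} := by
  have hlim : Tendsto (fun t : ℝ => a + t • ((a - f) + (a - b))) (𝓝[>] 0) (𝓝 a) := by
    refine tendsto_nhdsWithin_of_tendsto_nhds (Continuous.tendsto' (by fun_prop) _ _ ?_)
    rw [zero_smul, add_zero]
  refine mem_closure_of_tendsto hlim ?_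
  filter_upwards [self_mem_nhdsWithin] with t ht
  have hfa : orient f a (a + t • ((a - f) + (a - b))) = t * -orient f a b := by
    simp only [orient_eq, Prod.fst_add, Prod.snd_add, Prod.smul_fst, Prod.smul_snd, Prod.fst_sub,
      Prod.snd_sub, smul_eq_mul]
    ring
  have hab : orient a b (a + t • ((a - f) + (a - b))) = t * -orient f a b := by
    simp only [orient_eq, Prod.fst_add, Prod.snd_add, Prod.smul_fst, Prod.smul_snd, Prod.fst_sub,
      Prod.snd_sub, smul_eq_mul]
    ring
  rw [hfa, hab, and_self]
  exact mul_pos ht (neg_pos.2 hfab)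

end Corner

section Hexagon

theorem det2_sub_sub (p q r : Pt) : det2 (q - p) (r - q) = orient p q r := by
  simp only [orient_eq, det2, Prod.fst_sub, Prod.snd_sub]
  ring

theorem IsSimplePolygon.disjoint_edges {n : ℕ} [NeZero n] {v : Fin n → Pt} (hv : IsSimplePolygon v)
    {i j : Fin n} (hij : i ≠ j) (hij' : i ≠ j + 1) (hji : i + 1 ≠ j) :
    Disjoint (segment ℝ (v i) (v (i + 1))) (segment ℝ (v j) (v (j + 1))) := by
  have hadd : i + 1 ≠ j + 1 := fun h => hij (add_right_cancel h)
  refine disjoint_iff_inter_eq_empty.2 (subset_empty_iff.1 fun x hx => ?_)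
  rcases hv.2.2 i j hij hx with ⟨rfl | rfl, h | h⟩
  exacts [hij (hv.2.1 h), hij' (hv.2.1 h), hji (hv.2.1 h), hadd (hv.2.1 h)]

theorem IsSimplePolygon.inter_adjacent_edges_subset {n : ℕ} [NeZero n] {v : Fin n → Pt}
    (hv : IsSimplePolygon v) {i : Fin n} (hi : i + 1 + 1 ≠ i) :
    segment ℝ (v i) (v (i + 1)) ∩ segment ℝ (v (i + 1)) (v (i + 1 + 1)) ⊆ {v (i + 1)} := by
  have hne : i ≠ i + 1 := fun h => hi (by rw [← h, ← h])
  intro x hx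
  rcases hv.2.2 i (i + 1) hne hx with ⟨rfl | rfl, h | h⟩
  exacts [h, absurd (hv.2.1 h).symm hi, rfl, rfl]

variable {v : Fin 6 → Pt}

theorem signedArea2_hexagon (v : Fin 6 → Pt) :
    signedArea2 v = orient (v 0) (v 1) (v 2) + orient (v 2) (v 3) (v 0) +
      orient (v 0) (v 3) (v 4) + orient (v 4) (v 5) (v 0) := by
  have hsum : signedArea2 v = det2 (v 0) (v 1) + det2 (v 1) (v 2) + det2 (v 2) (v 3) +
      det2 (v 3) (v 4) + det2 (v 4) (v 5) + det2 (v 5) (v 0) := Fin.sum_univ_six _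
  rw [hsum]
  simp only [orient_eq, det2]
  ring

theorem obstructedHexagon_of_not_sees (hsimple : IsSimplePolygon v) (hccw : IsCCW v)
    (ha : ReflexAt v 0) (hb : StrictlyConvexAt v 1) (hd : StrictlyConvexAt v 3)
    (hf : StrictlyConvexAt v 5) (hce : ¬ Sees v (v 2) (v 4)) :
    ObstructedHexagon (v 0) (v 1) (v 2) (v 3) (v 4) (v 5) := by
  have habc : 0 < orient (v 0) (v 1) (v 2) := det2_sub_sub _ _ _ ▸ hb
  have hcde : 0 < orient (v 2) (v 3) (v 4) := det2_sub_sub _ _ _ ▸ hd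
  have hefa : 0 < orient (v 4) (v 5) (v 0) := det2_sub_sub _ _ _ ▸ hf
  obtain ⟨hcae, hefc, hbce⟩ := orient_signs_of_not_sees habc hcde hefa hce
  exact
    { abc := habc, cde := hcde, efa := hefa, cae := hcae, efc_of_fac := hefc, bce_of_eab := hbce
      fab := det2_sub_sub _ _ _ ▸ ha
      area := signedArea2_hexagon v ▸ hccw
      bc_ef := hsimple.disjoint_edges (i := 1) (j := 4) (by decide) (by decide) (by decide)
      fa_cd := hsimple.disjoint_edges (i := 5) (j := 2) (by decide) (by decide) (by decide)
      ab_de := hsimple.disjoint_edges (i := 0) (j := 3) (by decide) (by decide) (by decide)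
      ef_cd := hsimple.disjoint_edges (i := 4) (j := 2) (by decide) (by decide) (by decide)
      bc_de := hsimple.disjoint_edges (i := 1) (j := 3) (by decide) (by decide) (by decide)
      fa_de := hsimple.disjoint_edges (i := 5) (j := 3) (by decide) (by decide) (by decide)
      ab_cd := hsimple.disjoint_edges (i := 0) (j := 2) (by decide) (by decide) (by decide) }

theorem ObstructedHexagon.exists_forall_orient_pos {a b c d e f : Pt}
    (h : ObstructedHexagon a b c d e f) (hfab : orient f a b ≠ 0) :
    ∃ y, (0 < orient f a y ∧ 0 < orient a b y) ∧ 0 < orient b c y ∧ 0 < orient c d y ∧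
      0 < orient d e y ∧ 0 < orient e f y := by
  have isOpen_left (p q : Pt) : IsOpen {y | 0 < orient p q y} :=
    isOpen_lt continuous_const (continuous_orient p q)
  obtain ⟨y, hy, hcorner⟩ := mem_closure_iff.1 (mem_closure_corner (h.fab.lt_of_ne hfab)) _
    ((isOpen_left b c).inter ((isOpen_left c d).inter ((isOpen_left d e).inter (isOpen_left e f))))
    ⟨h.abc.trans_eq (orient_rotate a b c).symm, h.cda_pos,
      h.ade_pos.trans_eq (orient_rotate a d e).symm, h.efa⟩
  exact ⟨y, hcorner, hy⟩

end Hexagon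

/-- Lemma 5 (lemma:obstruct).  Let `abcdef` be a simple counterclockwise hexagon in
which `a` is the only reflex vertex other than possibly `c` or `e` (so `b`, `d`, `f`
are strictly convex and `a` is reflex).  If `c` does not see `e`, then
(i) `Wedge(a) ∩ Wedge(c) ≠ ∅` and (ii) `Wedge(a) ⊆ L(a, c)`. -/
theorem lemma_obstruct (v : Fin 6 → Pt)
    (hsimple : IsSimplePolygon v) (hccw : IsCCW v)
    (ha : ReflexAt v 0)
    (hb : StrictlyConvexAt v 1) (hd : StrictlyConvexAt v 3) (hf : StrictlyConvexAt v 5)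
    (hce : ¬ Sees v (v 2) (v 4)) :
    (Wedge v 0 ∩ Wedge v 2).Nonempty ∧ Wedge v 0 ⊆ Lhp (v 0) (v 2) := by
  have h := obstructedHexagon_of_not_sees hsimple hccw ha hb hd hf hce
  have hfab := orient_ne_zero_of_inter_segment_subset h.abc h.fac_neg
    (hsimple.inter_adjacent_edges_subset (i := 5) (by decide))
  obtain ⟨y, ⟨hfa, hab⟩, hbc, hcd, hde, hef⟩ := h.exists_forall_orient_pos hfab
  refine ⟨?_, fun x ⟨⟨hfax, hbax⟩, _⟩ => ?_⟩
  · have hy : ∀ i, 0 < orient (v i) (v (i + 1)) y := by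
      intro i; fin_cases i <;> assumption
    exact ⟨y, mem_Wedge_of_forall_orient_pos hy 0, mem_Wedge_of_forall_orient_pos hy 2⟩
  · have habx : 0 < orient (v 0) (v 1) x := by
      rw [orient_flip]
      exact neg_pos.2 hbax
    exact orient_pos_of_mem_corner h.abc h.fac_neg h.fab hfax habx
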